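/- Let n ≥ 1. Then the following identity of polynomials in ℚ[t] holds: n! · Σ_{π ∈ 𝔦_n} 4^{pk(π)+1} t^{pk(π)+1} (1+t)^{n−1−2·pk(π)} = 2 Σ_{k=1}^{n} c_{n,k} · 2^k · A_k(t) (1−t)^{n−k}, where c_{n,k} is the number of permutations π of [n] such that no cycle of π has length divisible by 4 and π² has exactly k cycles (counting fixed points as cycles of length 1). (This is the formula (1/2)((1+t)/(1−t))^{n+1} I_n^{pk}(4t/(1+t)²) = Σ_{k=1}^n (c_{n,k}/n!) 2^k A_k(t)/(1−t)^{k+1}, where I_n^{pk}(t) = Σ_{π ∈ 𝔦_n} t^{pk(π)+1}, with denominators cleared; note 2·pk(π) ≤ n−1 for every π ∈ S_n.) -/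

import Mathlib

open scoped Classical

noncomputable section

def oneLine (n : ℕ) (π : Equiv.Perm (Fin n)) (i : ℕ) : ℕ :=
  if h : 1 ≤ i ∧ i ≤ n then (π ⟨i - 1, by omega⟩).val + 1 else 0

def des (n : ℕ) (π : Equiv.Perm (Fin n)) : ℕ :=
  ((Finset.Icc 1 (n - 1)).filter fun i => oneLine n π (i + 1) < oneLine n π i).card

def pk (n : ℕ) (π : Equiv.Perm (Fin n)) : ℕ :=
  ((Finset.Icc 2 (n - 1)).filter fun i =>
    oneLine n π (i - 1) < oneLine n π i ∧ oneLine n π (i + 1) < oneLine n π i).card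

def lpk (n : ℕ) (π : Equiv.Perm (Fin n)) : ℕ :=
  ((Finset.Icc 1 (n - 1)).filter fun i =>
    oneLine n π (i - 1) < oneLine n π i ∧ oneLine n π (i + 1) < oneLine n π i).card

def pval (n : ℕ) (π : Equiv.Perm (Fin n)) : ℕ :=
  ((Finset.Icc 2 (n - 1)).filter fun i =>
    oneLine n π i < oneLine n π (i - 1) ∧ oneLine n π i < oneLine n π (i + 1)).card

def udr (n : ℕ) (π : Equiv.Perm (Fin n)) : ℕ := lpk n π + pval n π + 1

def fullCycleType (n : ℕ) (π : Equiv.Perm (Fin n)) : Multiset ℕ :=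
  π.cycleType + Multiset.replicate (n - π.support.card) 1

def numCycles (n : ℕ) (π : Equiv.Perm (Fin n)) : ℕ := Multiset.card (fullCycleType n π)

def numOddCycles (n : ℕ) (π : Equiv.Perm (Fin n)) : ℕ :=
  Multiset.card ((fullCycleType n π).filter fun p => p % 2 = 1)

def IsCyclicPerm (n : ℕ) (π : Equiv.Perm (Fin n)) : Prop :=
  fullCycleType n π = {n}

def cyclicSet (n : ℕ) : Finset (Equiv.Perm (Fin n)) :=
  Finset.univ.filter fun π => IsCyclicPerm n π

def invSet (n : ℕ) : Finset (Equiv.Perm (Fin n)) :=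
  Finset.univ.filter fun π => π ^ 2 = 1

def eulerianA (m : ℕ) : Polynomial ℚ :=
  ∑ π : Equiv.Perm (Fin m), Polynomial.X ^ (des m π + 1)

def peakP (m : ℕ) : Polynomial ℚ :=
  ∑ π : Equiv.Perm (Fin m), Polynomial.X ^ (pk m π + 1)

def leftPeakP (m : ℕ) : Polynomial ℚ :=
  ∑ π : Equiv.Perm (Fin m), Polynomial.X ^ (lpk m π)

def cnk (n k : ℕ) : ℕ :=
  (Finset.univ.filter fun π : Equiv.Perm (Fin n) =>
    (∀ p ∈ fullCycleType n π, ¬ (4 ∣ p)) ∧ numCycles n (π ^ 2) = k).card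

def bnk (n k : ℕ) : ℕ :=
  (Finset.univ.filter fun π : Equiv.Perm (Fin n) => numCycles n (π ^ 2) = k).card

def dnk (n k : ℕ) : ℕ :=
  (Finset.univ.filter fun π : Equiv.Perm (Fin n) => numOddCycles n (π ^ 2) = k).card

/-!
Fix `m` and give the `2 m` letters of the alphabet `B = {0, …, m - 1} × {marked, unmarked}` the
signs `-1` (marked) and `1` (unmarked). Once the marks of an enriched `π`-partition `F : [n] → B`
are chosen, its underlying word is weakly increasing with prescribed strict increases, and summing
over the marks shows that the number of such `F` is the coefficient of `t ^ m` in
`2 t (4 t) ^ pk π (1 + t) ^ (n - 1 - 2 pk π) / (1 - t) ^ (n + 1)`.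

Now sum over the involutions `π`. Sending `(π, F)` to the multiset of the pairs `(F i, F (π i))`
matches the pairs with `π ^ 2 = 1` with the symmetric multisets of `n` pairs of letters in which a
pair of differently signed letters is not repeated. Hence the generating function of their number
is a product over unordered pairs of letters. Because the signs sum to zero, the coefficient of
`t ^ p` in its logarithmic derivative `t f' / f` is `w p = (2 m) ^ gcd p 2` if `4 ∤ p`, and `0` if
`4 ∣ p`; so the number sought is the sum of `∏ i ∈ λ, w i / z_λ` over the partitions `λ` of `n`.
As a `p`-cycle squares to `gcd p 2` cycles, this is `∑ k, c_{n,k} (2 m) ^ k / n!`. The unsigned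
version of the first count gives `∑ m, m ^ k t ^ m = A_k(t) / (1 - t) ^ (k + 1)`, and the theorem
follows.
-/

section CycleType

open Equiv.Perm Function

variable {α : Type*} [Fintype α] [DecidableEq α] {σ : Equiv.Perm α}

theorem minimalPeriod_eq_card_support {c : Equiv.Perm α} {x : α}
    (hc : c ∈ σ.cycleFactorsFinset) (hx : x ∈ c.support) :
    minimalPeriod σ x = c.support.card := by
  obtain rfl := cycle_is_cycleOf hx hc
  have hcycle : (σ.cycleOf x).IsCycle := (mem_cycleFactorsFinset_iff.1 hc).1
  refine Nat.dvd_right_iff_eq.1 fun n => ?_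
  rw [← hcycle.orderOf, orderOf_dvd_iff_pow_eq_one, hcycle.pow_eq_one_iff' (mem_support.1 hx),
    cycleOf_pow_apply_self, ← isPeriodicPt_iff_minimalPeriod_dvd, IsPeriodicPt, IsFixedPt,
    iterate_eq_pow]

theorem sum_minimalPeriod {M : Type*} [AddCommMonoid M] (σ : Equiv.Perm α) (g : ℕ → M) :
    ∑ x, g (minimalPeriod σ x) = (σ.partition.parts.map fun p => p • g p).sum := by
  have hfixed : ∑ x ∈ σ.supportᶜ, g (minimalPeriod σ x) =
      (Fintype.card α - σ.support.card) • g 1 := by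
    rw [← Finset.card_compl, ← Finset.sum_const]
    refine Finset.sum_congr rfl fun x hx => ?_
    rw [minimalPeriod_eq_one_iff_isFixedPt.2 (by simpa [IsFixedPt] using hx)]
  have hmoved : ∑ x ∈ σ.support, g (minimalPeriod σ x) =
      (σ.cycleType.map fun p => p • g p).sum := by
    rw [cycleType_def, Multiset.map_map, ← Finset.sum_eq_multiset_sum,
      ← Finset.sum_fiberwise_of_maps_to (g := σ.cycleOf)
        fun x hx => cycleOf_mem_cycleFactorsFinset_iff.2 hx]
    refine Finset.sum_congr rfl fun c hc => ?_
    have hfiber : {x ∈ σ.support | σ.cycleOf x = c} = c.support := by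
      ext x
      rw [Finset.mem_filter]
      constructor
      · rintro ⟨hx, rfl⟩
        exact mem_support_cycleOf_iff.2 ⟨SameCycle.refl σ x, hx⟩
      · exact fun hx =>
          ⟨mem_cycleFactorsFinset_support_le hc hx, (cycle_is_cycleOf hx hc).symm⟩
    rw [hfiber, Finset.sum_congr rfl fun x hx => by rw [minimalPeriod_eq_card_support hc hx],
      Finset.sum_const, comp_apply, comp_apply]
  rw [← Finset.sum_add_sum_compl σ.support, hmoved, hfixed, parts_partition, Multiset.map_add,
    Multiset.sum_add, Multiset.map_replicate, Multiset.sum_replicate, one_smul]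

theorem card_parts_partition_eq_sum (σ : Equiv.Perm α) :
    (Multiset.card σ.partition.parts : ℚ) = ∑ x, (minimalPeriod σ x : ℚ)⁻¹ := by
  rw [sum_minimalPeriod σ fun p => (p : ℚ)⁻¹, Multiset.map_congr rfl fun p hp => by
    rw [nsmul_eq_mul, mul_inv_cancel₀ (Nat.cast_ne_zero.2 (σ.partition.parts_pos hp).ne')]]
  simp

/- A `p`-cycle has `gcd p d` cycles in its `d`-th power because the `d`-th power divides the period
of a point by `gcd p d`, and every permutation has `∑ x, 1 / (period of x)` cycles. -/
theorem card_parts_partition_pow (σ : Equiv.Perm α) {d : ℕ} (hd : d ≠ 0) :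
    Multiset.card (σ ^ d).partition.parts = (σ.partition.parts.map (Nat.gcd · d)).sum := by
  have hperiod (p : ℕ) : (((p / p.gcd d : ℕ) : ℚ))⁻¹ = p.gcd d / p := by
    rw [Nat.cast_div_charZero (Nat.gcd_dvd_left p d), inv_div]
  have key := sum_minimalPeriod σ fun p => (p.gcd d : ℚ) / p
  rw [Multiset.map_congr rfl fun p hp => by
    rw [nsmul_eq_mul, mul_div_cancel₀ _ (Nat.cast_ne_zero.2 (σ.partition.parts_pos hp).ne')]] at key
  rw [← Nat.cast_inj (R := ℚ), card_parts_partition_eq_sum, ← iterate_eq_pow]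
  simp only [minimalPeriod_iterate_eq_div_gcd hd, hperiod]
  rw [key, Nat.cast_multiset_sum, Multiset.map_map]
  rfl

end CycleType

section CentralizerCard

open Nat
open scoped Finset

/-- The number `z_λ = ∏ i, i ^ mᵢ * mᵢ!`, where `mᵢ` is the multiplicity of `i` in `s`: the order of
the centralizer of a permutation whose cycle lengths, fixed points included, form `s`. -/
def centralizerCard (s : Multiset ℕ) : ℕ := s.prod * ∏ i ∈ s.toFinset, (s.count i)!

theorem prod_factorial_count_cons (a : ℕ) (s : Multiset ℕ) :
    ∏ i ∈ (a ::ₘ s).toFinset, ((a ::ₘ s).count i)! =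
      (s.count a + 1) * ∏ i ∈ s.toFinset, (s.count i)! := by
  have hs : ∏ i ∈ s.toFinset, (s.count i)! = ∏ i ∈ insert a s.toFinset, (s.count i)! :=
    Finset.prod_subset (Finset.subset_insert _ _) fun i _ hi => by
      rw [Multiset.count_eq_zero.2 (mt Multiset.mem_toFinset.2 hi), factorial_zero]
  have ha : a ∈ insert a s.toFinset := Finset.mem_insert_self _ _
  rw [hs, Multiset.toFinset_cons, ← Finset.mul_prod_erase _ _ ha, ← Finset.mul_prod_erase _ _ ha,
    Multiset.count_cons_self, factorial_succ, mul_assoc]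
  congr 2
  exact Finset.prod_congr rfl fun i hi => by
    rw [Multiset.count_cons_of_ne (Finset.ne_of_mem_erase hi)]

theorem centralizerCard_cons (a : ℕ) (s : Multiset ℕ) :
    centralizerCard (a ::ₘ s) = a * (s.count a + 1) * centralizerCard s := by
  rw [centralizerCard, centralizerCard, prod_factorial_count_cons, Multiset.prod_cons]
  ring

theorem centralizerCard_ne_zero {s : Multiset ℕ} (hs : 0 ∉ s) : centralizerCard s ≠ 0 :=
  mul_ne_zero (mt Multiset.prod_eq_zero_iff.1 hs)
    (Finset.prod_ne_zero_iff.2 fun _ _ => factorial_ne_zero _)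

theorem centralizerCard_add_replicate_one {s : Multiset ℕ} (hs : 1 ∉ s) (k : ℕ) :
    centralizerCard (s + Multiset.replicate k 1) = k ! * centralizerCard s := by
  induction k with
  | zero => simp
  | succ k ih =>
    rw [Multiset.replicate_succ, Multiset.add_cons, centralizerCard_cons, ih, Multiset.count_add,
      Multiset.count_eq_zero.2 hs, Multiset.count_replicate_self, factorial_succ]
    ring

theorem parts_eq_filter_add_replicate_one {n : ℕ} (p : n.Partition) :
    p.parts = p.parts.filter (2 ≤ ·) +
      Multiset.replicate (n - (p.parts.filter (2 ≤ ·)).sum) 1 := by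
  have hones : p.parts.filter (¬ 2 ≤ ·) =
      Multiset.replicate (Multiset.card (p.parts.filter (¬ 2 ≤ ·))) 1 :=
    Multiset.eq_replicate_card.2 fun i hi => by
      have := p.parts_pos (Multiset.mem_of_mem_filter hi)
      have := (Multiset.mem_filter.1 hi).2
      lia
  have hsum := congrArg Multiset.sum (Multiset.filter_add_not (2 ≤ ·) p.parts)
  rw [Multiset.sum_add, p.parts_sum, hones, Multiset.sum_replicate, smul_eq_mul, mul_one] at hsum
  rw [← Nat.eq_sub_of_add_eq' hsum, ← hones, Multiset.filter_add_not]

theorem card_filter_partition_mul_centralizerCard {α : Type*} [Fintype α] [DecidableEq α]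
    (p : (Fintype.card α).Partition) :
    #{σ : Equiv.Perm α | σ.partition = p} * centralizerCard p.parts = (Fintype.card α)! := by
  set m := p.parts.filter (2 ≤ ·) with hm
  have hparts : p.parts = m + Multiset.replicate (Fintype.card α - m.sum) 1 :=
    parts_eq_filter_add_replicate_one p
  have hle : m.sum ≤ Fintype.card α := by
    have := p.parts_sum
    rw [hparts, Multiset.sum_add] at this
    lia
  have hpartition (σ : Equiv.Perm α) : σ.partition = p ↔ σ.cycleType = m := by
    constructor
    · rintro rfl
      exact Equiv.Perm.filter_parts_partition_eq_cycleType.symm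
    · intro h
      rw [Nat.Partition.ext_iff, Equiv.Perm.parts_partition, ← Equiv.Perm.sum_cycleType, h, hparts]
  have hone : 1 ∉ m := by simp [hm]
  have key := Equiv.Perm.card_of_cycleType_mul_eq α m
  rw [if_pos ⟨hle, fun a ha => (Multiset.mem_filter.1 ha).2⟩] at key
  rw [← key, hparts, centralizerCard_add_replicate_one hone, centralizerCard, mul_assoc]
  simp only [hpartition]

end CentralizerCard

section PartitionSum

variable {K : Type*} [Field K]

/-- The sum `∑ λ ⊢ n, (∏ i ∈ λ, w i) / z_λ`: the average over the permutations of `n` letters of the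
product of the weights `w` of the cycle lengths. -/
def partitionSum (w : ℕ → K) (n : ℕ) : K :=
  ∑ p : n.Partition, (p.parts.map w).prod / centralizerCard p.parts

theorem partitionSum_zero (w : ℕ → K) : partitionSum w 0 = 1 := by
  simp [partitionSum, centralizerCard]

theorem cast_eq_sum_mul_count_parts {n : ℕ} (p : n.Partition) :
    (n : K) = ∑ a ∈ Finset.Icc 1 n, (a : K) * p.parts.count a := by
  have hsub : p.parts.toFinset ⊆ Finset.Icc 1 n := fun a ha =>
    have ha := Multiset.mem_toFinset.1 ha
    Finset.mem_Icc.2 ⟨p.parts_pos ha, p.le_of_mem_parts ha⟩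
  conv_lhs => rw [← p.parts_sum, Finset.sum_multiset_count_of_subset _ _ hsub]
  push_cast [smul_eq_mul]
  exact Finset.sum_congr rfl fun a _ => mul_comm _ _

variable [CharZero K]

theorem sum_prod_map_parts_partition {α : Type*} [Fintype α] [DecidableEq α] (w : ℕ → K) :
    ∑ σ : Equiv.Perm α, (σ.partition.parts.map w).prod =
      (Fintype.card α).factorial * partitionSum w (Fintype.card α) := by
  rw [partitionSum, Finset.mul_sum, ← Finset.sum_fiberwise _ Equiv.Perm.partition]
  refine Finset.sum_congr rfl fun p _ => ?_
  have hz : (centralizerCard p.parts : K) ≠ 0 :=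
    Nat.cast_ne_zero.2 (centralizerCard_ne_zero fun h => (p.parts_pos h).ne rfl)
  rw [Finset.sum_congr rfl fun σ hσ => by rw [(Finset.mem_filter.1 hσ).2], Finset.sum_const,
    nsmul_eq_mul, ← card_filter_partition_mul_centralizerCard p, Nat.cast_mul, mul_assoc,
    mul_div_cancel₀ _ hz]

theorem mul_count_mul_prod_div_centralizerCard (w : ℕ → K) {a : ℕ} (ha : a ≠ 0) {s : Multiset ℕ}
    (has : a ∈ s) :
    (a : K) * s.count a * ((s.map w).prod / centralizerCard s) =
      w a * (((s.erase a).map w).prod / centralizerCard (s.erase a)) := by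
  obtain ⟨s, rfl⟩ := Multiset.exists_cons_of_mem has
  have hz : (a * (s.count a + 1) : K) ≠ 0 := by norm_cast; positivity
  rw [Multiset.erase_cons_head, centralizerCard_cons, Multiset.count_cons_self, Multiset.map_cons,
    Multiset.prod_cons]
  push_cast
  rw [mul_div_assoc', mul_div_mul_left _ _ hz, mul_div_assoc]

theorem sum_mul_count_mul_prod_div_centralizerCard (w : ℕ → K) {n a : ℕ} (ha : 1 ≤ a)
    (han : a ≤ n) :
    ∑ p : n.Partition,
        (a : K) * p.parts.count a * ((p.parts.map w).prod / centralizerCard p.parts) =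
      w a * partitionSum w (n - a) := by
  rw [partitionSum, Finset.mul_sum,
    ← Equiv.sum_comp (Nat.Partition.partitionWithPartEquiv ha han),
    ← Finset.sum_filter_of_ne (p := fun p : n.Partition => a ∈ p.parts)
      fun p _ hp => Multiset.count_ne_zero.1 fun h => hp (by rw [h]; simp),
    Finset.sum_subtype (p := fun p : n.Partition => a ∈ p.parts) _ (by simp)]
  refine Finset.sum_congr rfl fun p _ => ?_
  rw [Nat.Partition.partitionWithPartEquiv_apply_parts]
  exact mul_count_mul_prod_div_centralizerCard w (by lia) p.2

theorem mul_partitionSum (w : ℕ → K) (n : ℕ) :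
    n * partitionSum w n = ∑ a ∈ Finset.Icc 1 n, w a * partitionSum w (n - a) := by
  calc n * partitionSum w n
      = ∑ p : n.Partition, ∑ a ∈ Finset.Icc 1 n,
          (a : K) * p.parts.count a * ((p.parts.map w).prod / centralizerCard p.parts) := by
        rw [partitionSum, Finset.mul_sum]
        exact Finset.sum_congr rfl fun p _ => by
          rw [cast_eq_sum_mul_count_parts p, Finset.sum_mul]
    _ = ∑ a ∈ Finset.Icc 1 n, w a * partitionSum w (n - a) := by
        rw [Finset.sum_comm]
        refine Finset.sum_congr rfl fun a ha => ?_
        obtain ⟨ha, han⟩ := Finset.mem_Icc.1 ha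
        exact sum_mul_count_mul_prod_div_centralizerCard w ha han

end PartitionSum

section CycleWeight

variable {R : Type*} [CommSemiring R]

/-- The weight of a cycle of length `p` in `∑ k, c_{n,k} x ^ k`: it vanishes if `4 ∣ p`, and is `x`
to the number of cycles of the square of a `p`-cycle otherwise. -/
def cycleWeight (x : R) (p : ℕ) : R := if 4 ∣ p then 0 else x ^ p.gcd 2

theorem prod_map_cycleWeight (x : R) (s : Multiset ℕ) :
    (s.map (cycleWeight x)).prod =
      if ∀ p ∈ s, ¬ 4 ∣ p then x ^ (s.map (Nat.gcd · 2)).sum else 0 := by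
  induction s using Multiset.induction with
  | empty => simp
  | cons p s ih =>
    rw [Multiset.map_cons, Multiset.prod_cons, ih, cycleWeight, Multiset.map_cons,
      Multiset.sum_cons, pow_add]
    by_cases hp : 4 ∣ p <;> simp [hp]

theorem fullCycleType_eq_parts_partition {n : ℕ} (σ : Equiv.Perm (Fin n)) :
    fullCycleType n σ = σ.partition.parts := by
  rw [Equiv.Perm.parts_partition, Fintype.card_fin, fullCycleType]

theorem numCycles_sq {n : ℕ} (σ : Equiv.Perm (Fin n)) :
    numCycles n (σ ^ 2) = (σ.partition.parts.map (Nat.gcd · 2)).sum := by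
  rw [numCycles, fullCycleType_eq_parts_partition, card_parts_partition_pow σ two_ne_zero]

theorem numCycles_mem_Icc {n : ℕ} (hn : 1 ≤ n) (σ : Equiv.Perm (Fin n)) :
    numCycles n σ ∈ Finset.Icc 1 n := by
  have hsum : σ.partition.parts.sum = n := σ.partition.parts_sum.trans (Fintype.card_fin n)
  rw [numCycles, fullCycleType_eq_parts_partition, Finset.mem_Icc, Nat.one_le_iff_ne_zero]
  constructor
  · rw [Ne, Multiset.card_eq_zero]
    intro h
    rw [h, Multiset.sum_zero] at hsum
    lia
  · have hle := Multiset.card_nsmul_le_sum (a := 1) fun p hp => σ.partition.parts_pos hp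
    rwa [smul_eq_mul, mul_one, hsum] at hle

theorem sum_cnk_mul_pow {n : ℕ} (hn : 1 ≤ n) (x : R) :
    ∑ k ∈ Finset.Icc 1 n, (cnk n k : R) * x ^ k =
      ∑ σ : Equiv.Perm (Fin n), (σ.partition.parts.map (cycleWeight x)).prod := by
  calc ∑ k ∈ Finset.Icc 1 n, (cnk n k : R) * x ^ k
      = ∑ k ∈ Finset.Icc 1 n, ∑ σ : Equiv.Perm (Fin n) with
          (∀ p ∈ fullCycleType n σ, ¬ 4 ∣ p) ∧ numCycles n (σ ^ 2) = k,
            x ^ numCycles n (σ ^ 2) := by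
        refine Finset.sum_congr rfl fun k _ => ?_
        rw [Finset.sum_congr rfl fun σ hσ => by rw [(Finset.mem_filter.1 hσ).2.2],
          Finset.sum_const, nsmul_eq_mul, cnk]
    _ = ∑ σ : Equiv.Perm (Fin n) with ∀ p ∈ fullCycleType n σ, ¬ 4 ∣ p,
          x ^ numCycles n (σ ^ 2) := by
        simp only [← Finset.filter_filter]
        exact Finset.sum_fiberwise_of_maps_to (fun σ _ => numCycles_mem_Icc hn (σ ^ 2)) _
    _ = _ := by
        simp only [Finset.sum_filter, numCycles_sq, fullCycleType_eq_parts_partition,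
          prod_map_cycleWeight]

theorem sum_cnk_mul_pow_eq_partitionSum {K : Type*} [Field K] [CharZero K] {n : ℕ} (hn : 1 ≤ n)
    (x : K) :
    ∑ k ∈ Finset.Icc 1 n, (cnk n k : K) * x ^ k =
      n.factorial * partitionSum (cycleWeight x) n := by
  rw [sum_cnk_mul_pow hn, sum_prod_map_parts_partition, Fintype.card_fin]

end CycleWeight

section LogarithmicDerivative

open PowerSeries

variable {K : Type*} [Field K]

theorem coeff_X_mul_derivative {R : Type*} [CommSemiring R] (f : R⟦X⟧) (n : ℕ) :
    coeff n (X * d⁄dX R f) = n * coeff n f := by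
  cases n with
  | zero => simp
  | succ n => rw [coeff_succ_X_mul, coeff_derivative, mul_comm, Nat.cast_succ]

/-- `W` is the logarithmic derivative `X f' / f` of the power series `f`. -/
def IsLogDeriv {R : Type*} [CommSemiring R] (f W : R⟦X⟧) : Prop := X * d⁄dX R f = W * f

theorem IsLogDeriv.prod {R ι : Type*} [CommSemiring R] {t : Finset ι} {f W : ι → R⟦X⟧}
    (h : ∀ i ∈ t, IsLogDeriv (f i) (W i)) : IsLogDeriv (∏ i ∈ t, f i) (∑ i ∈ t, W i) := by
  induction t using Finset.cons_induction with
  | empty => simp [IsLogDeriv]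
  | cons a t ha ih =>
    have hf := h a (Finset.mem_cons_self a t)
    have ht := ih fun i hi => h i (Finset.mem_cons_of_mem hi)
    rw [IsLogDeriv] at hf ht ⊢
    rw [Finset.prod_cons, Finset.sum_cons, Derivation.leibniz, smul_eq_mul, smul_eq_mul, mul_add,
      mul_left_comm, ht, mul_left_comm X, hf]
    ring

theorem IsLogDeriv.unique {f g W : K⟦X⟧} [CharZero K] (hf : IsLogDeriv f W) (hg : IsLogDeriv g W)
    (hW : constantCoeff W = 0) (h0 : constantCoeff f = constantCoeff g) : f = g := by
  ext n
  induction n using Nat.strong_induction_on with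
  | _ n ih =>
    rcases Nat.eq_zero_or_pos n with rfl | hn
    · simpa using h0
    refine mul_left_cancel₀ (Nat.cast_ne_zero.2 hn.ne' : (n : K) ≠ 0) ?_
    rw [← coeff_X_mul_derivative, ← coeff_X_mul_derivative, hf, hg, coeff_mul, coeff_mul]
    refine Finset.sum_congr rfl fun ⟨i, j⟩ hij => ?_
    rw [Finset.HasAntidiagonal.mem_antidiagonal] at hij
    rcases Nat.eq_zero_or_pos i with rfl | hi
    · simp [hW]
    · rw [ih j (by lia)]

theorem isLogDeriv_mk_partitionSum [CharZero K] {w : ℕ → K} (hw : w 0 = 0) :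
    IsLogDeriv (mk (partitionSum w)) (mk w) := by
  ext n
  rw [coeff_X_mul_derivative, coeff_mk, mul_partitionSum, coeff_mul,
    Finset.Nat.sum_antidiagonal_eq_sum_range_succ_mk, Finset.range_eq_Ico,
    Finset.sum_eq_sum_Ico_succ_bot n.succ_pos]
  simp only [coeff_mk, hw, zero_mul, zero_add]
  rfl

theorem IsLogDeriv.of_mul_eq_one {R : Type*} [CommRing R] {f g W : R⟦X⟧} (hf : IsLogDeriv f (-W))
    (hfg : f * g = 1) : IsLogDeriv g W := by
  have hderiv : f * d⁄dX R g + g * d⁄dX R f = 0 := by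
    rw [← smul_eq_mul, ← smul_eq_mul, ← Derivation.leibniz, hfg, Derivation.map_one_eq_zero]
  rw [IsLogDeriv] at hf ⊢
  linear_combination X * g * hderiv - X * d⁄dX R g * hfg - g ^ 2 * hf + W * g * hfg

end LogarithmicDerivative

section PairSeries

open PowerSeries
open scoped Finset

variable {B : Type*}

/-- `k` can be the multiplicity of the unordered pair `e` in the multiset of letters of a symmetric
biword: letters `(a, b)` and `(b, a)` come together, and such a letter is not repeated when `a` and
`b` carry different signs. -/
def IsAdmissible (s : B → ℤˣ) (e : Sym2 B) (k : ℕ) : Prop :=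
  (e.IsDiag ∨ 2 ∣ k) ∧ ((e.map s).IsDiag ∨ k ≤ 2)

/-- The generating function of the admissible multiplicities of the unordered pair `e`. -/
def pairSeries (s : B → ℤˣ) (e : Sym2 B) : ℚ⟦X⟧ := mk fun k => if IsAdmissible s e k then 1 else 0

/-- The contribution of the ordered pair `(a, b)` to the logarithmic derivative of
`pairSeries s s(a, b)`. -/
def pairLogDeriv (s : B → ℤˣ) (a b : B) : ℚ⟦X⟧ :=
  mk fun k => if k = 0 then 0 else if Odd k then if a = b then 1 else 0
    else if 4 ∣ k then ((s a * s b : ℤˣ) : ℤ) else 1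

theorem isLogDeriv_pairSeries_diag (s : B → ℤˣ) (a : B) :
    IsLogDeriv (pairSeries s s(a, a)) (pairLogDeriv s a a) := by
  have hseries : pairSeries s s(a, a) = mk 1 := by
    ext k
    simp [pairSeries, IsAdmissible]
  have hlog : (1 - X) * pairLogDeriv s a a = X := by
    ext (_ | _ | k)
    · simp [pairLogDeriv]
    · simp [pairLogDeriv, sub_mul, coeff_succ_X_mul]
    · simp [pairLogDeriv, sub_mul, coeff_succ_X_mul, coeff_X]
  refine IsLogDeriv.of_mul_eq_one (f := 1 - X) ?_
    (by rw [hseries, mul_comm, mk_one_mul_one_sub_eq_one])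
  rw [IsLogDeriv, map_sub, derivative_X, Derivation.map_one_eq_zero]
  linear_combination hlog

theorem one_sub_mul_pairLogDeriv_add_swap (s : B → ℤˣ) {a b : B} (hab : a ≠ b) :
    (1 - (((s a * s b : ℤˣ) : ℤ) : ℚ⟦X⟧) * X ^ 2) * (pairLogDeriv s a b + pairLogDeriv s b a) =
      2 * X ^ 2 := by
  set ε : ℚ := (((s a * s b : ℤˣ) : ℤ) : ℚ) with hε
  have hε2 : ε * ε = 1 := by rw [hε, ← Int.cast_mul, Int.units_coe_mul_self, Int.cast_one]
  have hC : (((s a * s b : ℤˣ) : ℤ) : ℚ⟦X⟧) = C ε := by rw [hε, map_intCast]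
  have hsum : pairLogDeriv s a b + pairLogDeriv s b a =
      2 * mk fun k => if k = 0 ∨ Odd k then 0 else if 4 ∣ k then ε else 1 := by
    ext k
    rw [map_add, ← map_ofNat (C (R := ℚ)) 2, coeff_C_mul, pairLogDeriv, pairLogDeriv, coeff_mk,
      coeff_mk, coeff_mk, mul_comm (s b)]
    simp only [if_neg hab, if_neg hab.symm]
    grind
  rw [hC, hsum, mul_left_comm]
  congr 1
  ext k
  match k with
  | 0 => simp
  | 1 => simp [sub_mul, mul_assoc, coeff_X_pow_mul', coeff_X_pow]
  | k + 2 =>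
    rw [sub_mul, one_mul, map_sub, mul_assoc, coeff_C_mul, coeff_X_pow_mul, coeff_X_pow, coeff_mk,
      coeff_mk]
    rcases Nat.even_or_odd' k with ⟨j, rfl | rfl⟩ <;> grind

theorem isLogDeriv_pairSeries_of_eq (s : B → ℤˣ) {a b : B} (hab : a ≠ b) (hs : s a = s b) :
    IsLogDeriv (pairSeries s s(a, b)) (pairLogDeriv s a b + pairLogDeriv s b a) := by
  have hlog := one_sub_mul_pairLogDeriv_add_swap s hab
  rw [hs, Int.units_mul_self] at hlog
  refine IsLogDeriv.of_mul_eq_one (f := 1 - X ^ 2) ?_ ?_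
  · rw [IsLogDeriv, map_sub, derivative_pow, derivative_X, Derivation.map_one_eq_zero]
    push_cast at hlog ⊢
    linear_combination hlog
  · ext k
    match k with
    | 0 => simp [pairSeries, IsAdmissible, sub_mul]
    | 1 => simp [pairSeries, IsAdmissible, sub_mul, hab, coeff_X_pow_mul', coeff_one]
    | k + 2 =>
      rw [sub_mul, one_mul, map_sub, coeff_X_pow_mul]
      simp [pairSeries, IsAdmissible, hab, hs, coeff_one]

theorem isLogDeriv_pairSeries_of_ne (s : B → ℤˣ) {a b : B} (hs : s a ≠ s b) :
    IsLogDeriv (pairSeries s s(a, b)) (pairLogDeriv s a b + pairLogDeriv s b a) := by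
  have hab : a ≠ b := fun h => hs (congrArg s h)
  have hmul : s a * s b = -1 := by
    rw [Int.units_ne_iff_eq_neg.1 hs, neg_mul, Int.units_mul_self]
  have hseries : pairSeries s s(a, b) = 1 + X ^ 2 := by
    ext (_ | _ | _ | k) <;> simp [pairSeries, IsAdmissible, hab, hs, coeff_X_pow, coeff_one]
  have hlog := one_sub_mul_pairLogDeriv_add_swap s hab
  rw [hmul] at hlog
  rw [hseries, IsLogDeriv, map_add, derivative_pow, derivative_X, Derivation.map_one_eq_zero]
  push_cast at hlog ⊢
  linear_combination -hlog

theorem isLogDeriv_pairSeries (s : B → ℤˣ) [Fintype B] (e : Sym2 B) :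
    IsLogDeriv (pairSeries s e) (∑ p : B × B with s(p.1, p.2) = e, pairLogDeriv s p.1 p.2) := by
  induction e using Sym2.ind with
  | _ a b =>
    by_cases hab : a = b
    · subst hab
      have : ({p : B × B | s(p.1, p.2) = s(a, a)} : Finset (B × B)) = {(a, a)} := by
        ext ⟨x, y⟩; simp
      rw [this, Finset.sum_singleton]
      exact isLogDeriv_pairSeries_diag s a
    · have : ({p : B × B | s(p.1, p.2) = s(a, b)} : Finset (B × B)) = {(a, b), (b, a)} := by
        ext ⟨x, y⟩; simp
      rw [this, Finset.sum_pair (by simp [hab])]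
      exact (eq_or_ne (s a) (s b)).elim (isLogDeriv_pairSeries_of_eq s hab)
        (isLogDeriv_pairSeries_of_ne s)

theorem sum_pairLogDeriv [Fintype B] {s : B → ℤˣ} (hs : ∑ b, (s b : ℤ) = 0) :
    ∑ p : B × B, pairLogDeriv s p.1 p.2 = mk (cycleWeight (Fintype.card B : ℚ)) := by
  ext k
  rw [map_sum, coeff_mk, cycleWeight]
  simp only [pairLogDeriv, coeff_mk, Fintype.sum_prod_type]
  rcases eq_or_ne k 0 with rfl | hk
  · simp
  rcases Nat.even_or_odd k with heven | hodd
  · have hgcd : k.gcd 2 = 2 := Nat.gcd_eq_right heven.two_dvd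
    have hmul : ∑ a, ∑ b, (((s a * s b : ℤˣ) : ℤ) : ℚ) = 0 := by
      simp only [Units.val_mul, Int.cast_mul, ← Finset.sum_mul_sum]
      rw [← Int.cast_sum, hs, Int.cast_zero, zero_mul]
    simp only [if_neg hk, if_neg (Nat.not_odd_iff_even.2 heven), hgcd]
    split_ifs
    · exact hmul
    · simp [sq]
  · have hgcd : k.gcd 2 = 1 := Nat.coprime_two_right.2 hodd
    have h4 : ¬ 4 ∣ k := fun h => Nat.not_even_iff_odd.2 hodd (even_iff_two_dvd.2 (by lia))
    simp [hk, hodd, hgcd, h4]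

theorem constantCoeff_pairSeries (s : B → ℤˣ) (e : Sym2 B) :
    constantCoeff (pairSeries s e) = 1 := by
  rw [pairSeries, ← coeff_zero_eq_constantCoeff_apply, coeff_mk, if_pos]
  exact ⟨.inr (dvd_zero 2), .inr zero_le_two⟩

theorem coeff_prod_mk_ite {ι R : Type*} [CommSemiring R] (t : Finset ι) (P : ι → ℕ → Prop)
    (n : ℕ) :
    coeff n (∏ i ∈ t, mk fun k => if P i k then (1 : R) else 0) =
      (#{l ∈ t.finsuppAntidiag n | ∀ i ∈ t, P i (l i)} : R) := by
  rw [coeff_prod]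
  simp only [coeff_mk, Finset.prod_ite_zero, Finset.prod_const_one, Finset.sum_boole]

theorem card_admissible_eq_partitionSum [Fintype B] {s : B → ℤˣ} (hs : ∑ b, (s b : ℤ) = 0)
    (n : ℕ) :
    (#{l ∈ (Finset.univ : Finset (Sym2 B)).finsuppAntidiag n | ∀ e, IsAdmissible s e (l e)} : ℚ) =
      partitionSum (cycleWeight (Fintype.card B : ℚ)) n := by
  set w := cycleWeight (Fintype.card B : ℚ) with hw
  have hw0 : w 0 = 0 := if_pos (dvd_zero 4)
  have hlog : IsLogDeriv (∏ e, pairSeries s e) (mk w) := by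
    rw [hw, ← sum_pairLogDeriv hs, ← Finset.sum_fiberwise _ fun p : B × B => s(p.1, p.2)]
    exact IsLogDeriv.prod fun e _ => isLogDeriv_pairSeries s e
  have hconst : constantCoeff (∏ e, pairSeries s e) = constantCoeff (mk (partitionSum w)) := by
    rw [map_prod, Finset.prod_congr rfl fun e _ => constantCoeff_pairSeries s e,
      Finset.prod_const_one, constantCoeff_mk, partitionSum_zero]
  rw [← coeff_mk n (partitionSum w),
    ← hlog.unique (isLogDeriv_mk_partitionSum hw0) (by rw [constantCoeff_mk, hw0]) hconst]
  refine .trans ?_ (coeff_prod_mk_ite Finset.univ (IsAdmissible s) n).symm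
  simp only [Finset.mem_univ, true_imp_iff]
  congr!

end PairSeries

section Sorting

open scoped Finset

variable {n : ℕ}

theorem eq_sort_iff_strictMono {γ : Type*} [LinearOrder γ] {f : Fin n → γ}
    (hf : Function.Injective f) {σ : Equiv.Perm (Fin n)} :
    σ = Tuple.sort f ↔ StrictMono (f ∘ σ) := by
  rw [Tuple.eq_sort_iff]
  constructor
  · exact fun h => h.1.strictMono_of_injective (hf.comp σ.injective)
  · exact fun h => ⟨h.monotone, fun i j hij he => absurd he (h hij).ne⟩

theorem inv_sort_lt_inv_sort_iff {γ : Type*} [LinearOrder γ] {f : Fin n → γ}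
    (hf : Function.Injective f) {i j : Fin n} :
    (Tuple.sort f)⁻¹ i < (Tuple.sort f)⁻¹ j ↔ f i < f j := by
  rw [← ((eq_sort_iff_strictMono hf).1 rfl).lt_iff_lt]
  simp

theorem eq_of_monotone_of_map_univ_eq {γ : Type*} [PartialOrder γ] {f g : Fin n → γ}
    (hf : Monotone f) (hg : Monotone g)
    (h : (Finset.univ : Finset (Fin n)).val.map f = Finset.univ.val.map g) : f = g := by
  rw [Fin.univ_val_map, Fin.univ_val_map, Multiset.coe_eq_coe] at h
  exact List.ofFn_injective
    (h.eq_of_sortedLE (List.sortedLE_ofFn_iff.2 hf) (List.sortedLE_ofFn_iff.2 hg))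

theorem count_map_univ {γ : Type*} [DecidableEq γ] (f : Fin n → γ) (c : γ) :
    (Finset.univ.val.map f).count c = #{i | f i = c} := by
  simp only [Multiset.count_map, Finset.card_def, Finset.filter_val, eq_comm]

theorem exists_map_univ_eq {γ : Type*} {M : Multiset γ} (hM : Multiset.card M = n) :
    ∃ f : Fin n → γ, (Finset.univ : Finset (Fin n)).val.map f = M := by
  subst hM
  induction M using Quotient.inductionOn with
  | h l => exact ⟨l.get, (Fin.univ_val_map _).trans (congrArg _ (List.ofFn_get l))⟩

theorem exists_monotone_comp_map_univ_eq {γ δ : Type*} [LinearOrder δ] (key : γ → δ)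
    {M : Multiset γ} (hM : Multiset.card M = n) :
    ∃ f : Fin n → γ, Monotone (key ∘ f) ∧ (Finset.univ : Finset (Fin n)).val.map f = M := by
  obtain ⟨f, rfl⟩ := exists_map_univ_eq hM
  refine ⟨f ∘ Tuple.sort (key ∘ f), Tuple.monotone_sort (key ∘ f), ?_⟩
  rw [← Multiset.map_map, Multiset.map_univ_val_equiv]

theorem exists_strictMono_int (γ : Type*) [Finite γ] [LinearOrder γ] :
    ∃ r : γ → ℤ, StrictMono r := by
  have := Fintype.ofFinite γ
  exact ⟨fun c => ((Fintype.orderIsoFinOfCardEq γ rfl).symm c : ℕ), fun a b hab => by simpa⟩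

end Sorting

section Enriched

open scoped Finset

variable {n : ℕ} {B C : Type*} {s : B → ℤˣ} {t : C → ℤˣ} {π π' : Equiv.Perm (Fin n)}
  {F F' : Fin n → B} {G G' : Fin n → C}

/-- The key that sorts the positions `j` of a word `w` by the letter `w j`, breaking ties by `j` if
this letter is unmarked (`s (w j) = 1`) and by `-j` if it is marked (`s (w j) = -1`). -/
def signKey (s : B → ℤˣ) (w : Fin n → B) (j : Fin n) : B ×ₗ ℤ :=
  toLex (w j, (s (w j) : ℤ) * (j : ℤ))

theorem signKey_injective (s : B → ℤˣ) (w : Fin n → B) : Function.Injective (signKey s w) := by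
  intro i j h
  obtain ⟨hw, hij⟩ := Prod.mk.inj (toLex.injective h)
  rw [hw, mul_right_inj' (Units.ne_zero _)] at hij
  exact Fin.ext (Int.natCast_inj.1 hij)

/-- The multiset of letters `(F i, G (π i))` of the biword attached to `π`, `F` and `G`. -/
def biword (π : Equiv.Perm (Fin n)) (F : Fin n → B) (G : Fin n → C) : Multiset (B × C) :=
  (Finset.univ : Finset (Fin n)).val.map fun i => (F i, G (π i))

theorem card_biword : Multiset.card (biword π F G) = n := by simp [biword]

theorem map_swap_biword : (biword π F G).map Prod.swap = biword π⁻¹ G F := by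
  rw [biword, biword, Multiset.map_map]
  conv_rhs => rw [← Multiset.map_univ_val_equiv π, Multiset.map_map]
  simp

/-- The key that sorts the letters `(b, c)` of a biword by `b`, breaking ties by the rank `r c` of
`c` if `b` is unmarked and by `-r c` if it is marked. -/
def pairKey (s : B → ℤˣ) (r : C → ℤ) (p : B × C) : B ×ₗ ℤ := toLex (p.1, (s p.1 : ℤ) * r p.2)

theorem pairKey_injective {r : C → ℤ} (hr : Function.Injective r) :
    Function.Injective (pairKey s r) := by
  intro p q h
  obtain ⟨hb, hc⟩ := Prod.mk.inj (toLex.injective h)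
  rw [hb, mul_right_inj' (Units.ne_zero _)] at hc
  exact Prod.ext hb (hr hc)

variable [LinearOrder B] [LinearOrder C]

/-- `F` is an enriched `π`-partition with values in the alphabet `B`, in which a letter `b` is
marked when `s b = -1`: the word `F` is weakly increasing, and `π` increases along the positions of
a given unmarked letter and decreases along the positions of a given marked letter. -/
def IsEnriched (s : B → ℤˣ) (π : Equiv.Perm (Fin n)) (F : Fin n → B) : Prop :=
  StrictMono fun i => toLex (F i, (s (F i) : ℤ) * (π i : ℤ))

theorem isEnriched_comp_iff {w : Fin n → B} :
    IsEnriched s π (w ∘ π) ↔ π = Tuple.sort (signKey s w) :=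
  (eq_sort_iff_strictMono (signKey_injective s w)).symm

theorem IsEnriched.monotone (h : IsEnriched s π F) : Monotone F :=
  fun i j hij => Prod.Lex.monotone_fst (toLex (F i, _)) (toLex (F j, _))
    (StrictMono.monotone h hij)

theorem sum_card_isEnriched [Fintype B] (s : B → ℤˣ) (n : ℕ) :
    ∑ π : Equiv.Perm (Fin n), #{F : Fin n → B | IsEnriched s π F} = Fintype.card B ^ n := by
  rw [← Fintype.card_fin n, ← Fintype.card_fun, Fintype.card_fin, ← Finset.card_univ,
    Finset.card_eq_sum_card_fiberwise (f := fun w => Tuple.sort (signKey s w)) (t := Finset.univ)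
      (by simp)]
  refine Finset.sum_congr rfl fun π _ => (Finset.card_equiv (π.arrowCongr (.refl B)).symm ?_).symm
  intro w
  simp only [Finset.mem_filter_univ]
  rw [eq_comm, ← isEnriched_comp_iff]
  rfl

theorem isEnriched_inv_iff : IsEnriched t π⁻¹ G ↔ π⁻¹ = Tuple.sort (signKey t (G ∘ π)) := by
  rw [← isEnriched_comp_iff, Function.comp_assoc, ← Equiv.Perm.coe_mul, mul_inv_cancel]
  rfl

theorem IsEnriched.mul_lt_mul (h : IsEnriched s π F) {i j : Fin n} (hij : i < j)
    (hF : F i = F j) : (s (F i) : ℤ) * (π i : ℤ) < (s (F i) : ℤ) * (π j : ℤ) := by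
  rcases Prod.Lex.toLex_lt_toLex.1 (h hij) with hlt | ⟨-, hlt⟩
  · exact absurd hF hlt.ne
  · rwa [← hF] at hlt

theorem IsEnriched.lt_iff_signKey_lt (h : IsEnriched t π⁻¹ G) (i j : Fin n) :
    π i < π j ↔ signKey t (G ∘ π) i < signKey t (G ∘ π) j := by
  simpa only [← isEnriched_inv_iff.1 h, inv_inv] using
    inv_sort_lt_inv_sort_iff (signKey_injective t (G ∘ π)) (i := i) (j := j)

theorem IsEnriched.monotone_pairKey {r : C → ℤ} (hr : Monotone r) (hF : IsEnriched s π F)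
    (hG : IsEnriched t π⁻¹ G) : Monotone fun i => pairKey s r (F i, G (π i)) := by
  refine monotone_iff_forall_lt.2 fun i j hij => ?_
  rw [pairKey, pairKey, Prod.Lex.toLex_le_toLex]
  rcases (hF.monotone hij.le).lt_or_eq with hlt | heq
  · exact .inl hlt
  refine .inr ⟨heq, ?_⟩
  have hπ := hF.mul_lt_mul hij heq
  simp only [← heq]
  rcases Int.units_eq_one_or (s (F i)) with hs | hs <;>
    simp only [hs, Units.val_one, Units.val_neg, one_mul, neg_mul, neg_lt_neg_iff, neg_le_neg_iff,
      Nat.cast_lt, Fin.val_fin_lt] at hπ ⊢ <;>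
    exact hr (hG.monotone hπ.le)

theorem biword_injective [Finite C] (hF : IsEnriched s π F) (hG : IsEnriched t π⁻¹ G)
    (hF' : IsEnriched s π' F') (hG' : IsEnriched t π'⁻¹ G')
    (h : biword π F G = biword π' F' G') : π = π' ∧ F = F' ∧ G = G' := by
  obtain ⟨r, hr⟩ := exists_strictMono_int C
  have hkey := eq_of_monotone_of_map_univ_eq (hF.monotone_pairKey hr.monotone hG)
    (hF'.monotone_pairKey hr.monotone hG')
    (by simpa [biword, Function.comp_def] using congrArg (Multiset.map (pairKey s r)) h)
  have hword (i : Fin n) : (F i, G (π i)) = (F' i, G' (π' i)) :=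
    pairKey_injective hr.injective (congrFun hkey i)
  have hFF : F = F' := funext fun i => congrArg Prod.fst (hword i)
  have hGG : G ∘ π = G' ∘ π' := funext fun i => congrArg Prod.snd (hword i)
  have hπ : π = π' := inv_injective <| by
    rw [isEnriched_inv_iff.1 hG, hGG, ← isEnriched_inv_iff.1 hG']
  subst hπ
  exact ⟨rfl, hFF, π.surjective.injective_comp_right hGG⟩

theorem IsEnriched.count_biword_le_one (hF : IsEnriched s π F) (hG : IsEnriched t π⁻¹ G) {b : B}
    {c : C} (hbc : s b ≠ t c) : (biword π F G).count (b, c) ≤ 1 := by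
  by_contra! hcount
  rw [biword, count_map_univ] at hcount
  obtain ⟨i, hi, j, hj, hne⟩ := Finset.one_lt_card.1 hcount
  wlog hij : i < j generalizing i j
  · exact this j hj i hi hne.symm (hne.lt_or_gt.resolve_left hij)
  obtain ⟨rfl, rfl⟩ := Prod.mk.inj ((Finset.mem_filter_univ i).1 hi)
  obtain ⟨hFij, hGij⟩ := Prod.mk.inj ((Finset.mem_filter_univ j).1 hj)
  have hsπ := hF.mul_lt_mul hij hFij.symm
  have hsign := hG.lt_iff_signKey_lt i j
  simp only [signKey, Function.comp_apply, hGij, Prod.Lex.toLex_lt_toLex, lt_irrefl, false_or,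
    true_and] at hsign
  rcases Int.units_eq_one_or (s (F i)) with hs | hs <;>
    rcases Int.units_eq_one_or (t (G (π i))) with ht | ht <;>
    simp only [hs, ht, Units.val_one, Units.val_neg, one_mul, neg_mul, neg_lt_neg_iff,
      Nat.cast_lt, Fin.val_fin_lt, ne_eq, not_true_eq_false] at hbc hsπ hsign
  · exact hij.not_gt (hsign.1 hsπ)
  · exact hsπ.not_gt (hsign.2 hij)

theorem isEnriched_inv_sort {W : Fin n → B × C} {r : C → ℤ} (hr : StrictMono r)
    (hmono : Monotone (pairKey s r ∘ W))
    (hW : ∀ i j, i ≠ j → W i = W j → s (W i).1 = t (W i).2) :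
    IsEnriched s (Tuple.sort (signKey t fun i => (W i).2))⁻¹ fun i => (W i).1 := by
  intro i j hij
  rcases Prod.Lex.toLex_le_toLex.1 (hmono hij.le) with hb | ⟨hb, hle⟩
  · exact Prod.Lex.toLex_lt_toLex.2 (.inl hb)
  change (W i).1 = (W j).1 at hb
  refine Prod.Lex.toLex_lt_toLex.2 (.inr ⟨hb, ?_⟩)
  have hst (hc : (W i).2 = (W j).2) : s (W i).1 = t (W i).2 := hW i j hij.ne (Prod.ext hb hc)
  rcases Int.units_eq_one_or (s (W i).1) with hs | hs <;>
    simp only [← hb, hs, Units.val_one, Units.val_neg, one_mul, neg_mul, neg_lt_neg_iff,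
      neg_le_neg_iff, Nat.cast_lt, Fin.val_fin_lt, hr.le_iff_le,
      inv_sort_lt_inv_sort_iff (signKey_injective t _), signKey, Prod.Lex.toLex_lt_toLex]
      at hle hst ⊢
  · exact hle.lt_or_eq.imp_right fun hc => ⟨hc, by simpa [← hc, ← hst hc] using hij⟩
  · exact hle.lt_or_eq.imp_right fun hc => ⟨hc, by simpa [hc, ← hst hc.symm] using hij⟩

theorem exists_biword_eq [Finite C] {M : Multiset (B × C)} (hM : Multiset.card M = n)
    (hcount : ∀ b c, s b ≠ t c → M.count (b, c) ≤ 1) :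
    ∃ π F G, IsEnriched s π F ∧ IsEnriched t π⁻¹ G ∧ biword (n := n) π F G = M := by
  obtain ⟨r, hr⟩ := exists_strictMono_int C
  obtain ⟨W, hmono, rfl⟩ := exists_monotone_comp_map_univ_eq (pairKey s r) hM
  set σ := Tuple.sort (signKey t fun i => (W i).2) with hσ
  refine ⟨σ⁻¹, fun i => (W i).1, fun i => (W (σ i)).2, isEnriched_inv_sort hr hmono ?_,
    isEnriched_comp_iff.2 hσ, by simp [biword]⟩
  intro i j hij hWij
  by_contra hne
  refine (hcount _ _ hne).not_gt ?_
  rw [count_map_univ]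
  exact Finset.one_lt_card.2 ⟨i, by simp, j, by simp [hWij], hij⟩

end Enriched

section SymmetricBiwords

open scoped Finset

variable {B : Type*} {s : B → ℤˣ} {n : ℕ}

theorem sum_univ_eq_card_toMultiset {α : Type*} [Fintype α] (l : α →₀ ℕ) :
    ∑ a, l a = Multiset.card (Finsupp.toMultiset l) := by
  rw [Finsupp.card_toMultiset, Finsupp.sum_fintype _ _ fun _ => rfl]
  rfl

theorem count_map_sym2 [DecidableEq B] {M : Multiset (B × B)} (hM : M.map Prod.swap = M) (a b : B) :
    (M.map fun p => s(p.1, p.2)).count s(a, b) = (if a = b then 1 else 2) * M.count (a, b) := by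
  have hswap : M.count (b, a) = M.count (a, b) := by
    conv_lhs => rw [← hM]
    exact Multiset.count_map_eq_count' Prod.swap M Prod.swap_injective (a, b)
  have hcount : (M.map fun p => s(p.1, p.2)).count s(a, b) =
      if a = b then M.count (a, b) else M.count (a, b) + M.count (b, a) := by
    clear hM hswap
    induction M using Multiset.induction_on with
    | empty => simp
    | cons p M ih =>
      obtain ⟨x, y⟩ := p
      simp only [Multiset.map_cons, Multiset.count_cons, ih, Sym2.eq_iff, Prod.mk.injEq]
      grind
  rw [hcount, hswap]
  split_ifs
  · rw [one_mul]
  · rw [two_mul]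

theorem eq_of_map_sym2_eq {M N : Multiset (B × B)} (hM : M.map Prod.swap = M)
    (hN : N.map Prod.swap = N)
    (h : (M.map fun p => s(p.1, p.2)) = N.map fun p => s(p.1, p.2)) : M = N := by
  ext ⟨a, b⟩
  have hab := count_map_sym2 hM a b
  rw [h, count_map_sym2 hN] at hab
  exact (Nat.eq_of_mul_eq_mul_left (by split_ifs <;> simp) hab).symm

theorem exists_symmetric_map_sym2_eq [Finite B] [DecidableEq B] {N : Multiset (Sym2 B)}
    (hN : ∀ e, e.IsDiag ∨ 2 ∣ N.count e) :
    ∃ M : Multiset (B × B), M.map Prod.swap = M ∧ (M.map fun p => s(p.1, p.2)) = N := by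
  set M : Multiset (B × B) := Finsupp.toMultiset <| Finsupp.equivFunOnFinite.symm fun p =>
    N.count s(p.1, p.2) / if p.1 = p.2 then 1 else 2 with hM
  have hcount (a b : B) : M.count (a, b) = N.count s(a, b) / if a = b then 1 else 2 := by
    rw [hM, Finsupp.count_toMultiset]
    rfl
  have hswap : M.map Prod.swap = M := by
    ext ⟨a, b⟩
    rw [← Prod.swap_prod_mk, Multiset.count_map_eq_count' _ _ Prod.swap_injective, hcount,
      Prod.swap_prod_mk, hcount, Sym2.eq_swap]
    simp only [eq_comm]
  refine ⟨M, hswap, Multiset.ext.2 fun e => ?_⟩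
  induction e with | h a b =>
  rw [count_map_sym2 hswap, hcount, Nat.mul_div_cancel']
  split_ifs with hab
  · exact one_dvd _
  · exact (hN s(a, b)).resolve_left hab

variable {π : Equiv.Perm (Fin n)} {F : Fin n → B}

theorem map_swap_biword_self (hπ : π ^ 2 = 1) :
    (biword π F F).map Prod.swap = biword π F F := by
  rw [map_swap_biword, inv_eq_of_mul_eq_one_left (by rwa [← sq])]

variable [LinearOrder B]

theorem IsEnriched.inv_of_sq (hF : IsEnriched s π F) (hπ : π ^ 2 = 1) : IsEnriched s π⁻¹ F := by
  rwa [inv_eq_of_mul_eq_one_left (by rwa [← sq])]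

theorem IsEnriched.isAdmissible_count (hπ : π ^ 2 = 1) (hF : IsEnriched s π F) (e : Sym2 B) :
    IsAdmissible s e (((biword π F F).map fun p => s(p.1, p.2)).count e) := by
  induction e with | h a b =>
  rw [count_map_sym2 (map_swap_biword_self hπ)]
  refine ⟨?_, or_iff_not_imp_left.2 fun hs => ?_⟩
  · rw [Sym2.mk_isDiag_iff, or_iff_not_imp_left]
    exact fun hab => by simp [hab]
  · have := hF.count_biword_le_one (hF.inv_of_sq hπ) (b := a) (c := b) hs
    split_ifs <;> lia

theorem exists_isEnriched_involution [Finite B] {N : Multiset (Sym2 B)}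
    (hN : ∀ e, IsAdmissible s e (N.count e)) (hcard : Multiset.card N = n) :
    ∃ (π : Equiv.Perm (Fin n)) (F : Fin n → B), π ^ 2 = 1 ∧ IsEnriched s π F ∧
      (biword π F F).map (fun p => s(p.1, p.2)) = N := by
  obtain ⟨M, hswap, rfl⟩ := exists_symmetric_map_sym2_eq fun e => (hN e).1
  rw [Multiset.card_map] at hcard
  obtain ⟨π, F, G, hF, hG, rfl⟩ := exists_biword_eq (s := s) (t := s) hcard fun b c hbc => by
    have hle := (hN s(b, c)).2.resolve_left hbc
    rw [count_map_sym2 hswap, if_neg (ne_of_apply_ne s hbc)] at hle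
    lia
  rw [map_swap_biword] at hswap
  obtain ⟨hπ, rfl, -⟩ := biword_injective hG ((inv_inv π).symm ▸ hF) hF hG hswap
  exact ⟨π, G, by rw [sq, mul_eq_one_iff_inv_eq, hπ], hF, rfl⟩

theorem sum_invSet_card_isEnriched_eq_card_admissible [Fintype B] (s : B → ℤˣ) (n : ℕ) :
    ∑ π ∈ invSet n, #{F : Fin n → B | IsEnriched s π F} =
      #{l ∈ (Finset.univ : Finset (Sym2 B)).finsuppAntidiag n | ∀ e, IsAdmissible s e (l e)} := by
  rw [← Finset.card_sigma]
  refine Finset.card_bij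
    (fun x _ => Multiset.toFinsupp ((biword x.1 x.2 x.2).map fun p => s(p.1, p.2))) ?_ ?_ ?_
  · rintro ⟨π, F⟩ h
    simp only [Finset.mem_sigma, invSet, Finset.mem_filter_univ] at h
    simp only [Finset.mem_filter, Finset.mem_finsuppAntidiag, Finset.subset_univ, and_true]
    refine ⟨?_, fun e => h.2.isAdmissible_count h.1 e⟩
    rw [sum_univ_eq_card_toMultiset, Multiset.toFinsupp_toMultiset, Multiset.card_map, card_biword]
  · rintro ⟨π, F⟩ h ⟨π', F'⟩ h' heq
    simp only [Finset.mem_sigma, invSet, Finset.mem_filter_univ] at h h'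
    have hword : biword π F F = biword π' F' F' :=
      eq_of_map_sym2_eq (map_swap_biword_self h.1) (map_swap_biword_self h'.1)
        (Multiset.toFinsupp.injective heq)
    obtain ⟨rfl, rfl, -⟩ :=
      biword_injective h.2 (h.2.inv_of_sq h.1) h'.2 (h'.2.inv_of_sq h'.1) hword
    rfl
  · intro l hl
    simp only [Finset.mem_filter, Finset.mem_finsuppAntidiag, Finset.subset_univ, and_true] at hl
    obtain ⟨π, F, hπ, hF, hword⟩ := exists_isEnriched_involution (N := Finsupp.toMultiset l)
      (by simpa only [Finsupp.count_toMultiset] using hl.2)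
      (by rw [← sum_univ_eq_card_toMultiset, hl.1])
    exact ⟨⟨π, F⟩, by simp [invSet, hπ, hF], by rw [hword, Finsupp.toMultiset_toFinsupp]⟩

theorem sum_invSet_card_isEnriched [Fintype B] (hs : ∑ b, (s b : ℤ) = 0) (n : ℕ) :
    ∑ π ∈ invSet n, (#{F : Fin n → B | IsEnriched s π F} : ℚ) =
      partitionSum (cycleWeight (Fintype.card B : ℚ)) n := by
  rw [← Nat.cast_sum, sum_invSet_card_isEnriched_eq_card_admissible,
    ← card_admissible_eq_partitionSum hs n]
  congr!

end SymmetricBiwords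

section Compatible

open PowerSeries
open scoped Finset

variable {n : ℕ}

/-- `f` is compatible with `D`: it is weakly increasing, and strictly so at the positions in `D`. -/
def IsCompatible {γ : Type*} [Preorder γ] (D : Finset (Fin n)) (f : Fin (n + 1) → γ) : Prop :=
  ∀ i, if i ∈ D then f i.castSucc < f i.succ else f i.castSucc ≤ f i.succ

/-- The functions with values in `{0, …, m - 1}` that are compatible with `D`. -/
def compatibleFunctions (D : Finset (Fin n)) (m : ℕ) : Finset (Fin (n + 1) → ℕ) :=
  {f ∈ Fintype.piFinset fun _ => Finset.range m | IsCompatible D f}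

theorem mem_compatibleFunctions {D : Finset (Fin n)} {m : ℕ} {f : Fin (n + 1) → ℕ} :
    f ∈ compatibleFunctions D m ↔ (∀ i, f i < m) ∧ IsCompatible D f := by
  simp [compatibleFunctions]

theorem card_isCompatible_fin (D : Finset (Fin n)) (m : ℕ) :
    #{F : Fin (n + 1) → Fin m | IsCompatible D F} = #(compatibleFunctions D m) := by
  refine Finset.card_bij (fun F _ i => (F i : ℕ)) ?_ ?_ ?_
  · intro F hF
    exact mem_compatibleFunctions.2 ⟨fun i => (F i).2, (Finset.mem_filter_univ F).1 hF⟩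
  · intro F _ F' _ h
    exact funext fun i => Fin.ext (congrFun h i)
  · intro f hf
    obtain ⟨hlt, hcomp⟩ := mem_compatibleFunctions.1 hf
    exact ⟨fun i => ⟨f i, hlt i⟩, (Finset.mem_filter_univ _).2 hcomp, rfl⟩

theorem IsCompatible.monotone {γ : Type*} [Preorder γ] {D : Finset (Fin n)} {f : Fin (n + 1) → γ}
    (h : IsCompatible D f) : Monotone f := by
  refine Fin.monotone_iff_le_succ.2 fun i => ?_
  have hi := h i
  split_ifs at hi
  exacts [hi.le, hi]

theorem isCompatible_snoc {γ : Type*} [Preorder γ] {D : Finset (Fin (n + 1))}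
    {g : Fin (n + 1) → γ} {v : γ} :
    IsCompatible D (Fin.snoc g v : Fin (n + 2) → γ) ↔
      IsCompatible {i : Fin n | i.castSucc ∈ D} g ∧
        if Fin.last n ∈ D then g (Fin.last n) < v else g (Fin.last n) ≤ v := by
  simp only [IsCompatible, Fin.forall_fin_succ', Fin.snoc_castSucc, Fin.succ_castSucc,
    Fin.succ_last, Fin.snoc_last, Finset.mem_filter_univ]

theorem snoc_mem_compatibleFunctions {D : Finset (Fin (n + 1))} {m v : ℕ} {g : Fin (n + 1) → ℕ} :
    (Fin.snoc g v : Fin (n + 2) → ℕ) ∈ compatibleFunctions D m ↔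
      v < m ∧ g ∈ compatibleFunctions {i : Fin n | i.castSucc ∈ D}
        (if Fin.last n ∈ D then v else v + 1) := by
  simp only [mem_compatibleFunctions, isCompatible_snoc, Fin.forall_fin_succ', Fin.snoc_castSucc,
    Fin.snoc_last]
  constructor
  · rintro ⟨⟨-, hv⟩, hg, hlast⟩
    have hle (i : Fin (n + 1)) : g i ≤ g (Fin.last n) := hg.monotone (Fin.le_last i)
    exact ⟨hv, by grind, hg⟩
  · rintro ⟨hv, hlt, hg⟩
    grind

theorem card_compatibleFunctions_succ (D : Finset (Fin (n + 1))) (m : ℕ) :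
    #(compatibleFunctions D m) = ∑ v ∈ Finset.range m,
      #(compatibleFunctions {i : Fin n | i.castSucc ∈ D}
        (if Fin.last n ∈ D then v else v + 1)) := by
  rw [Finset.card_eq_sum_card_fiberwise (f := fun f => f (Fin.last (n + 1)))
    fun f hf => Finset.mem_range.2 ((mem_compatibleFunctions.1 (Finset.mem_coe.1 hf)).1 _)]
  refine Finset.sum_congr rfl fun v hv => ?_
  refine Finset.card_nbij' Fin.init (fun g => Fin.snoc g v) ?_ ?_ ?_ ?_
  · intro f hf
    obtain ⟨hcomp, rfl⟩ := Finset.mem_filter.1 (Finset.mem_coe.1 hf)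
    rw [← Fin.snoc_init_self f] at hcomp
    exact (snoc_mem_compatibleFunctions.1 hcomp).2
  · intro g hg
    refine Finset.mem_filter.2 ⟨snoc_mem_compatibleFunctions.2 ⟨Finset.mem_range.1 hv, hg⟩, ?_⟩
    exact Fin.snoc_last _ _
  · intro f hf
    obtain ⟨-, rfl⟩ := Finset.mem_filter.1 hf
    exact Fin.snoc_init_self f
  · intro g _
    exact Fin.init_snoc _ _

theorem card_eq_card_castSucc_add (D : Finset (Fin (n + 1))) :
    #D = #{i : Fin n | i.castSucc ∈ D} + if Fin.last n ∈ D then 1 else 0 := by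
  rw [← Finset.filter_univ_mem D, Finset.card_filter, Fin.sum_univ_castSucc, Finset.card_filter]
  simp

theorem one_sub_X_mul_mk_sum_range {R : Type*} [Ring R] (a : ℕ → R) :
    (1 - X) * mk (fun m => ∑ v ∈ Finset.range m, a v) = X * mk a := by
  ext k
  rw [sub_mul, one_mul, map_sub]
  cases k with
  | zero => simp
  | succ k => simp [coeff_succ_X_mul, Finset.sum_range_succ]

theorem compatibleFunctions_zero_right (D : Finset (Fin n)) : compatibleFunctions D 0 = ∅ :=
  Finset.eq_empty_of_forall_notMem fun _ hf => ((mem_compatibleFunctions.1 hf).1 0).not_ge zero_le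

theorem one_sub_X_pow_mul_mk_card_compatibleFunctions (D : Finset (Fin n)) :
    (1 - X) ^ (n + 2) * mk (fun m => (#(compatibleFunctions D m) : ℚ)) = X ^ (#D + 1) := by
  induction n with
  | zero =>
    have hcard (m : ℕ) : (#(compatibleFunctions D m) : ℚ) = ∑ v ∈ Finset.range m, 1 := by
      simp [compatibleFunctions, IsCompatible]
    have hgeom : (1 - X) * mk 1 = (1 : ℚ⟦X⟧) := by
      rw [mul_comm, mk_one_mul_one_sub_eq_one]
    rw [funext hcard, pow_succ, mul_assoc, one_sub_X_mul_mk_sum_range, pow_one,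
      mul_left_comm, Finset.eq_empty_of_isEmpty D]
    exact (congrArg (X * ·) hgeom).trans (by simp)
  | succ n ih =>
    set D' : Finset (Fin n) := {i : Fin n | i.castSucc ∈ D}
    have hshift : X * mk (fun v => (#(compatibleFunctions D'
        (if Fin.last n ∈ D then v else v + 1)) : ℚ)) =
        X ^ (if Fin.last n ∈ D then 1 else 0) * mk fun v => (#(compatibleFunctions D' v) : ℚ) := by
      split_ifs
      · rw [pow_one]
      · ext k
        cases k <;> simp [coeff_succ_X_mul, compatibleFunctions_zero_right]
    rw [funext fun m => congrArg Nat.cast (card_compatibleFunctions_succ D m)]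
    push_cast
    rw [pow_succ, mul_assoc, one_sub_X_mul_mk_sum_range, hshift, mul_left_comm, ih,
      card_eq_card_castSucc_add D, ← pow_add]
    ring

end Compatible

section Peaks

open scoped Finset symmDiff

variable {n : ℕ}

/-- The descents `i` of `π`, indexed from `0`. -/
def descents (π : Equiv.Perm (Fin (n + 1))) : Finset (Fin n) := {i | π i.succ < π i.castSucc}

/-- The positions, indexed from `0`, of the peaks of a permutation with set of descents `D`. -/
def peaks (D : Finset (Fin n)) : Finset (Fin (n + 1)) :=
  D.map Fin.castSuccEmb ∩ Dᶜ.map (Fin.succEmb n)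

theorem oneLine_val_add_one (π : Equiv.Perm (Fin n)) (i : Fin n) :
    oneLine n π (i + 1) = (π i : ℕ) + 1 :=
  dif_pos ⟨Nat.le_add_left 1 i, i.2⟩

theorem oneLine_val_add_one_lt_iff {π : Equiv.Perm (Fin n)} {i j : Fin n} :
    oneLine n π (i + 1) < oneLine n π (j + 1) ↔ π i < π j := by
  rw [oneLine_val_add_one, oneLine_val_add_one, Nat.add_lt_add_iff_right, Fin.val_fin_lt]

theorem mem_descents_iff_oneLine_lt {π : Equiv.Perm (Fin (n + 1))} {i : Fin n} :
    i ∈ descents π ↔ oneLine (n + 1) π (i + 1 + 1) < oneLine (n + 1) π (i + 1) :=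
  (Finset.mem_filter_univ i).trans (oneLine_val_add_one_lt_iff (i := i.succ)).symm

theorem notMem_descents_iff {π : Equiv.Perm (Fin (n + 1))} {i : Fin n} :
    i ∉ descents π ↔ π i.castSucc < π i.succ := by
  rw [descents, Finset.mem_filter_univ, not_lt, (π.injective.ne i.castSucc_lt_succ.ne).le_iff_lt]

theorem notMem_descents_iff_oneLine_lt {π : Equiv.Perm (Fin (n + 1))} {i : Fin n} :
    i ∉ descents π ↔ oneLine (n + 1) π (i + 1) < oneLine (n + 1) π (i + 1 + 1) :=
  notMem_descents_iff.trans (oneLine_val_add_one_lt_iff (i := i.castSucc) (j := i.succ)).symm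

theorem des_eq_card_descents (π : Equiv.Perm (Fin (n + 1))) : des (n + 1) π = #(descents π) := by
  refine (Finset.card_bij (fun (i : Fin n) _ => (i : ℕ) + 1) ?_ ?_ ?_).symm
  · intro i hi
    exact Finset.mem_filter.2 ⟨Finset.mem_Icc.2 (by lia), mem_descents_iff_oneLine_lt.1 hi⟩
  · intro i _ j _ h
    exact Fin.ext (Nat.succ_injective h)
  · intro k hk
    obtain ⟨hk, hdes⟩ := Finset.mem_filter.1 hk
    rw [Finset.mem_Icc] at hk
    obtain ⟨k, rfl⟩ := Nat.exists_eq_add_of_le' hk.1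
    exact ⟨⟨k, hk.2⟩, mem_descents_iff_oneLine_lt.2 hdes, rfl⟩

theorem pk_eq_card_peaks (π : Equiv.Perm (Fin (n + 1))) :
    pk (n + 1) π = #(peaks (descents π)) := by
  refine (Finset.card_bij (fun (j : Fin (n + 1)) _ => (j : ℕ) + 1) ?_ ?_ ?_).symm
  · intro j hj
    simp only [peaks, Finset.mem_inter, Finset.mem_map, Finset.mem_compl] at hj
    obtain ⟨⟨i, hi, rfl⟩, i', hi', heq⟩ := hj
    have hval : (i' : ℕ) + 1 = i := congrArg Fin.val heq
    have hasc := notMem_descents_iff_oneLine_lt.1 hi'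
    rw [hval] at hasc
    refine Finset.mem_filter.2 ⟨Finset.mem_Icc.2 ?_, hasc, mem_descents_iff_oneLine_lt.1 hi⟩
    rw [Fin.castSuccEmb_apply, Fin.val_castSucc]
    lia
  · intro i _ j _ h
    exact Fin.ext (Nat.succ_injective h)
  · intro k hk
    obtain ⟨hk, hasc, hdes⟩ := Finset.mem_filter.1 hk
    rw [Finset.mem_Icc] at hk
    obtain ⟨k, rfl⟩ := Nat.exists_eq_add_of_le' hk.1
    refine ⟨⟨k + 1, by lia⟩, Finset.mem_inter.2 ⟨?_, ?_⟩, rfl⟩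
    · exact Finset.mem_map.2 ⟨⟨k + 1, hk.2⟩, mem_descents_iff_oneLine_lt.2 hdes, rfl⟩
    · exact Finset.mem_map.2
        ⟨⟨k, by lia⟩, Finset.mem_compl.2 (notMem_descents_iff_oneLine_lt.2 hasc), rfl⟩

theorem sum_prod_mul_prod_bool {J R : Type*} [Fintype J] [DecidableEq J] [CommSemiring R]
    (A U : Finset J) (x : R) :
    ∑ ε : J → Bool, (∏ j ∈ A, if ε j then x else 1) * ∏ j ∈ U, (if ε j then 1 else x) =
      (2 * x) ^ #(A ∩ U) * (1 + x) ^ #(A ∆ U) * 2 ^ #(A ∪ U)ᶜ := by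
  let c (j : J) (b : Bool) : R := (if j ∈ A then if b then x else 1 else 1) *
    if j ∈ U then if b then 1 else x else 1
  calc
    _ = ∑ ε : J → Bool, ∏ j, c j (ε j) := by
      simp only [c, Finset.prod_mul_distrib, Finset.prod_ite_mem, Finset.univ_inter]
    _ = ∏ j, ∑ b, c j b := (Fintype.prod_sum c).symm
    _ = ∏ j, (if j ∈ A ∩ U then 2 * x else 1) * (if j ∈ A ∆ U then 1 + x else 1) *
          if j ∈ (A ∪ U)ᶜ then 2 else 1 := by
      refine Finset.prod_congr rfl fun j _ => ?_
      by_cases hA : j ∈ A <;> by_cases hU : j ∈ U <;>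
        simp [c, hA, hU, Finset.mem_symmDiff, two_mul, one_add_one_eq_two, add_comm]
    _ = _ := by
      rw [Finset.prod_mul_distrib, Finset.prod_mul_distrib]
      simp only [Finset.prod_ite_mem, Finset.univ_inter, Finset.prod_const]

/-- The positions at which the underlying letters of an enriched `π`-partition strictly increase,
where `D` is the set of descents of `π` and `ε` tells which letters are unmarked. -/
def strictPositions (D : Finset (Fin n)) (ε : Fin (n + 1) → Bool) : Finset (Fin n) :=
  {i | if i ∈ D then ε i.castSucc else ¬ ε i.succ}

theorem pow_card_strictPositions {R : Type*} [CommSemiring R] (D : Finset (Fin n))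
    (ε : Fin (n + 1) → Bool) (x : R) :
    x ^ #(strictPositions D ε) = (∏ j ∈ D.map Fin.castSuccEmb, if ε j then x else 1) *
      ∏ j ∈ Dᶜ.map (Fin.succEmb n), if ε j then 1 else x := by
  calc
    _ = ∏ i, if i ∈ strictPositions D ε then x else 1 := by
      simp only [Finset.prod_ite_mem, Finset.univ_inter, Finset.prod_const]
    _ = ∏ i, if i ∈ D then if ε i.castSucc then x else 1 else if ε i.succ then 1 else x := by
      refine Finset.prod_congr rfl fun i _ => ?_
      by_cases hi : i ∈ D <;> cases h : ε i.succ <;> simp [strictPositions, hi, h]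
    _ = _ := by
      rw [Finset.prod_map, Finset.prod_map, ← Finset.prod_mul_prod_compl D]
      refine congrArg₂ _ (Finset.prod_congr rfl fun i hi => if_pos hi) ?_
      exact Finset.prod_congr rfl fun i hi => if_neg (Finset.mem_compl.1 hi)

theorem sum_pow_card_strictPositions {R : Type*} [CommSemiring R] (D : Finset (Fin n)) (x : R) :
    ∑ ε : Fin (n + 1) → Bool, x ^ #(strictPositions D ε) =
      2 * (4 * x) ^ #(peaks D) * (1 + x) ^ (n - 2 * #(peaks D)) := by
  simp only [pow_card_strictPositions, sum_prod_mul_prod_bool]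
  set A := D.map Fin.castSuccEmb
  set U := Dᶜ.map (Fin.succEmb n)
  have hcard : #A + #U = n := by
    rw [Finset.card_map, Finset.card_map, Finset.card_add_card_compl, Fintype.card_fin]
  have hunion : #(A ∪ U) + #(peaks D) = n :=
    (Finset.card_union_add_card_inter A U).trans hcard
  have hsymm : #(A ∆ U) + #(peaks D) = #(A ∪ U) := by
    rw [symmDiff_eq_sup_sdiff_inf]
    exact Finset.card_sdiff_add_card_eq_card (Finset.inter_subset_union)
  have hcompl : #(A ∪ U)ᶜ = 1 + #(peaks D) := by
    rw [Finset.card_compl, Fintype.card_fin]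
    lia
  rw [show #(A ∆ U) = n - 2 * #(peaks D) by lia, hcompl, ← peaks, pow_add, pow_one,
    show (4 : R) = 2 * 2 by norm_num]
  simp only [mul_pow]
  ring

end Peaks

section EnrichedSeries

open PowerSeries
open scoped Finset

variable {n : ℕ}

theorem isEnriched_iff_forall_descents {B : Type*} [LinearOrder B] {s : B → ℤˣ}
    {π : Equiv.Perm (Fin (n + 1))} {F : Fin (n + 1) → B} :
    IsEnriched s π F ↔ ∀ i, F i.castSucc < F i.succ ∨
      F i.castSucc = F i.succ ∧ (i ∈ descents π ↔ s (F i.castSucc) = -1) := by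
  refine Fin.strictMono_iff_lt_succ.trans (forall_congr' fun i => ?_)
  rw [Prod.Lex.toLex_lt_toLex]
  refine or_congr_right (and_congr_right fun (heq : F i.castSucc = F i.succ) => ?_)
  rw [← heq]
  rcases Int.units_eq_one_or (s (F i.castSucc)) with hs | hs
  · simpa [hs] using notMem_descents_iff.symm
  · simp [hs, descents]

theorem isEnriched_one_iff {γ : Type*} [LinearOrder γ] {π : Equiv.Perm (Fin (n + 1))}
    {F : Fin (n + 1) → γ} :
    IsEnriched (fun _ => 1) π F ↔ IsCompatible (descents π) F := by
  refine isEnriched_iff_forall_descents.trans (forall_congr' fun i => ?_)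
  split_ifs with hi <;> simp [hi, le_iff_lt_or_eq]

theorem coe_eulerianA_succ (n : ℕ) :
    (eulerianA (n + 1) : ℚ⟦X⟧) = (1 - X) ^ (n + 2) * mk fun m => (m : ℚ) ^ (n + 1) := by
  have hcard (m : ℕ) : (m : ℚ) ^ (n + 1) =
      ∑ π : Equiv.Perm (Fin (n + 1)), (#(compatibleFunctions (descents π) m) : ℚ) := by
    have h := sum_card_isEnriched (fun _ : Fin m => 1) (n + 1)
    simp only [isEnriched_one_iff, card_isCompatible_fin, Fintype.card_fin] at h
    exact_mod_cast h.symm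
  have hmk : mk (fun m => (m : ℚ) ^ (n + 1)) =
      ∑ π : Equiv.Perm (Fin (n + 1)), mk fun m => (#(compatibleFunctions (descents π) m) : ℚ) := by
    ext m
    simp only [coeff_mk, map_sum, hcard]
  rw [hmk, Finset.mul_sum, eulerianA, ← Polynomial.coeToPowerSeries.ringHom_apply]
  simp only [map_sum, map_pow, Polynomial.coeToPowerSeries.ringHom_apply, Polynomial.coe_X,
    one_sub_X_pow_mul_mk_card_compatibleFunctions, des_eq_card_descents]

/-- The sign of a letter `(k, b)` of the marked alphabet `{0, …, m - 1} × Bool`, ordered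
lexicographically: the unmarked letters are the `(k, true)`. -/
def markSign {m : ℕ} (b : Fin m ×ₗ Bool) : ℤˣ := if (ofLex b).2 then 1 else -1

theorem sum_markSign (m : ℕ) : ∑ b : Fin m ×ₗ Bool, (markSign b : ℤ) = 0 := by
  rw [← toLex.sum_comp, Fintype.sum_prod_type]
  simp [markSign]

theorem isEnriched_markSign_iff {m : ℕ} {π : Equiv.Perm (Fin (n + 1))} {F : Fin (n + 1) → Fin m}
    {ε : Fin (n + 1) → Bool} :
    IsEnriched markSign π (fun i => toLex (F i, ε i)) ↔
      IsCompatible (strictPositions (descents π) ε) F := by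
  refine isEnriched_iff_forall_descents.trans (forall_congr' fun i => ?_)
  simp only [Prod.Lex.toLex_lt_toLex, strictPositions, Finset.mem_filter_univ, markSign,
    toLex_inj, Prod.mk.injEq, ofLex_toLex]
  by_cases hi : i ∈ descents π <;> cases ε i.castSucc <;> cases ε i.succ <;>
    simp [hi, le_iff_lt_or_eq]

theorem card_isEnriched_markSign (π : Equiv.Perm (Fin (n + 1))) (m : ℕ) :
    #{F : Fin (n + 1) → Fin m ×ₗ Bool | IsEnriched markSign π F} =
      ∑ ε, #(compatibleFunctions (strictPositions (descents π) ε) m) := by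
  let e : (Fin (n + 1) → Fin m) × (Fin (n + 1) → Bool) ≃ (Fin (n + 1) → Fin m ×ₗ Bool) :=
    (Equiv.arrowProdEquivProdArrow _ _ _).symm.trans (Equiv.arrowCongr (Equiv.refl _) toLex)
  simp only [← card_isCompatible_fin, ← isEnriched_markSign_iff, Finset.card_filter]
  rw [← e.sum_comp, Fintype.sum_prod_type_right]
  rfl

theorem one_sub_X_pow_mul_mk_card_isEnriched_markSign (π : Equiv.Perm (Fin (n + 1))) :
    (1 - X) ^ (n + 2) *
        mk (fun m => (#{F : Fin (n + 1) → Fin m ×ₗ Bool | IsEnriched markSign π F} : ℚ)) =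
      2 * (X * ((4 * X) ^ pk (n + 1) π * (1 + X) ^ (n - 2 * pk (n + 1) π))) := by
  have hmk : mk (fun m => (#{F : Fin (n + 1) → Fin m ×ₗ Bool | IsEnriched markSign π F} : ℚ)) =
      ∑ ε, mk fun m => (#(compatibleFunctions (strictPositions (descents π) ε) m) : ℚ) := by
    ext m
    simp only [coeff_mk, map_sum, card_isEnriched_markSign, Nat.cast_sum]
  rw [hmk, Finset.mul_sum]
  simp only [one_sub_X_pow_mul_mk_card_compatibleFunctions]
  simp only [pow_succ']
  rw [← Finset.mul_sum, sum_pow_card_strictPositions, pk_eq_card_peaks]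
  ring

end EnrichedSeries

section Assembly

open PowerSeries
open scoped Finset

theorem sum_invSet_pk_eq_partitionSum_series (n : ℕ) :
    ∑ π ∈ invSet (n + 1),
        (2 * (X * ((4 * X) ^ pk (n + 1) π * (1 + X) ^ (n - 2 * pk (n + 1) π))) : ℚ⟦X⟧) =
      (1 - X) ^ (n + 2) *
        mk fun m => partitionSum (cycleWeight (2 * m : ℚ)) (n + 1) := by
  have hmk : (mk fun m => partitionSum (cycleWeight (2 * m : ℚ)) (n + 1)) =
      ∑ π ∈ invSet (n + 1),
        mk fun m => (#{F : Fin (n + 1) → Fin m ×ₗ Bool | IsEnriched markSign π F} : ℚ) := by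
    ext m
    have h := sum_invSet_card_isEnriched (sum_markSign m) (n + 1)
    simp only [coeff_mk, map_sum, h]
    simp [mul_comm]
  simp only [hmk, Finset.mul_sum, one_sub_X_pow_mul_mk_card_isEnriched_markSign]

theorem sum_cnk_mul_eulerianA_eq_partitionSum_series {n : ℕ} (hn : 1 ≤ n) :
    ∑ k ∈ Finset.Icc 1 n, (cnk n k : ℚ⟦X⟧) * 2 ^ k * (eulerianA k : ℚ⟦X⟧) * (1 - X) ^ (n - k) =
      (n.factorial : ℚ⟦X⟧) *
        ((1 - X) ^ (n + 1) * mk fun m => partitionSum (cycleWeight (2 * m : ℚ)) n) := by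
  have hmk : (n.factorial : ℚ⟦X⟧) * (mk fun m => partitionSum (cycleWeight (2 * m : ℚ)) n) =
      ∑ k ∈ Finset.Icc 1 n, C ((cnk n k : ℚ) * 2 ^ k) * mk fun m => (m : ℚ) ^ k := by
    ext m
    rw [← map_natCast (C (R := ℚ)), coeff_C_mul, coeff_mk, ← sum_cnk_mul_pow_eq_partitionSum hn]
    simp only [coeff_mk, map_sum, coeff_C_mul, mul_pow, mul_assoc]
  rw [mul_left_comm, hmk, Finset.mul_sum]
  refine Finset.sum_congr rfl fun k hk => ?_
  rw [Finset.mem_Icc] at hk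
  obtain ⟨j, rfl⟩ := Nat.exists_eq_add_of_le' hk.1
  obtain ⟨i, rfl⟩ := Nat.exists_eq_add_of_le' hk.2
  rw [coe_eulerianA_succ, Nat.add_sub_cancel, map_mul, map_pow, map_natCast, map_ofNat]
  ring

end Assembly

theorem stmt10 (n : ℕ) (hn : 1 ≤ n) :
    (n.factorial : Polynomial ℚ)
        * ∑ π ∈ invSet n,
            (4 : Polynomial ℚ) ^ (pk n π + 1) * Polynomial.X ^ (pk n π + 1)
              * (1 + Polynomial.X) ^ (n - 1 - 2 * pk n π)
      = 2 * ∑ k ∈ Finset.Icc 1 n,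
          (cnk n k : Polynomial ℚ) * 2 ^ k * eulerianA k
            * (1 - Polynomial.X) ^ (n - k) := by
  obtain ⟨n, rfl⟩ := Nat.exists_eq_add_of_le' hn
  apply Polynomial.coe_injective
  rw [← Polynomial.coeToPowerSeries.ringHom_apply, ← Polynomial.coeToPowerSeries.ringHom_apply]
  simp only [map_mul, map_sum, map_pow, map_natCast, map_ofNat, map_add, map_sub, map_one,
    Polynomial.coeToPowerSeries.ringHom_apply, Polynomial.coe_X]
  rw [sum_cnk_mul_eulerianA_eq_partitionSum_series hn, ← sum_invSet_pk_eq_partitionSum_series,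
    mul_left_comm 2]
  congr 1
  rw [Finset.mul_sum]
  refine Finset.sum_congr rfl fun π _ => ?_
  rw [Nat.add_sub_cancel]
  ring

end
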